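/- Let X be a compact metric space, for each t ≥ 0 let β_t be a Borel probability measure on X and δ_t : X → 𝒫(X) a measurable map. Suppose there exists a lower semicontinuous convex functional J : 𝒫(X) → [0, +∞] with {J = 0} nonempty such that for every open neighborhood U of {J = 0} in 𝒫(X) one has limsup_{t→+∞} (1/t) log ν_t(𝒫(X)∖U) ≤ − inf { J(m) : m ∈ 𝒫(X)∖U }. Then every weak limit μ of the measures μ_t as t → +∞ satisfies J(μ) = 0. -/

import Mathlib

open MeasureTheory Filter Topology ENNReal NNReal

/-- A functional `J` on the space of probability measures is convex: it satisfies
`J (a • μ + (1 - a) • ν) ≤ a * J μ + (1 - a) * J ν`. -/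
def ConvexPMFunctional {X : Type*} [MeasurableSpace X]
    (J : ProbabilityMeasure X → ℝ≥0∞) : Prop :=
  ∀ μ ν : ProbabilityMeasure X, ∀ a : NNReal, a ≤ 1 →
    ∀ σ : ProbabilityMeasure X,
      (σ : Measure X) = (a : ℝ≥0∞) • (μ : Measure X) + ((1 - a : NNReal) : ℝ≥0∞) • (ν : Measure X) →
      J σ ≤ (a : ℝ≥0∞) * J μ + ((1 - a : NNReal) : ℝ≥0∞) * J ν

/-- The algebraic functional on `C(X, ℝ)` given by integration. -/
noncomputable def intFunctional {X : Type*} [MetricSpace X] [CompactSpace X] [MeasurableSpace X]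
    [BorelSpace X] (m : ProbabilityMeasure X) : Module.Dual ℝ C(X, ℝ) where
  toFun f := ∫ x, f x ∂(m : Measure X)
  map_add' f g := by
    have hf : ∀ f : C(X, ℝ), Integrable f (m : Measure X) := fun f =>
      f.continuous.integrable_of_hasCompactSupport (HasCompactSupport.of_compactSpace _)
    exact integral_add (hf f) (hf g)
  map_smul' a f := by
    simp [integral_const_mul]

lemma separation_lemma {X : Type*} [MetricSpace X] [CompactSpace X] [MeasurableSpace X]
    [BorelSpace X] (K : Set (ProbabilityMeasure X)) (hK : IsClosed K)
    (hconv : ∀ μ ∈ K, ∀ ν ∈ K, ∀ a : NNReal, a ≤ 1 → ∀ σ : ProbabilityMeasure X,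
      (σ : Measure X) = (a : ℝ≥0∞) • (μ : Measure X)
        + ((1 - a : NNReal) : ℝ≥0∞) • (ν : Measure X) → σ ∈ K)
    (p : ProbabilityMeasure X) (hp : p ∉ K) :
    ∃ (f : C(X, ℝ)) (c : ℝ), (∀ m ∈ K, ∫ x, f x ∂(m : Measure X) < c) ∧
      c < ∫ x, f x ∂(p : Measure X) := by
  classical
  have hint : ∀ (m : ProbabilityMeasure X) (f : C(X, ℝ)), Integrable f (m : Measure X) :=
    fun m f => f.continuous.integrable_of_hasCompactSupport (HasCompactSupport.of_compactSpace _)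
  let B : Module.Dual ℝ C(X, ℝ) →ₗ[ℝ] C(X, ℝ) →ₗ[ℝ] ℝ := LinearMap.id
  let Φ : ProbabilityMeasure X → WeakBilin B := fun m => intFunctional m
  have hΦ : Continuous Φ := by
    apply WeakBilin.continuous_of_continuous_eval
    intro f
    exact ProbabilityMeasure.continuous_integral_continuousMap f
  have hinj : Function.Injective Φ := by
    intro m n h
    apply Subtype.ext
    have : IsFiniteMeasure (m : Measure X) := inferInstance
    have : IsFiniteMeasure (n : Measure X) := inferInstance
    refine @ext_of_forall_integral_eq_of_IsFiniteMeasure X _ _ _ _ (m : Measure X) (n : Measure X) _ _ ?_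
    intro f
    exact congrArg (fun L : Module.Dual ℝ C(X, ℝ) => L f.toContinuousMap) h
  have : T2Space (WeakBilin B) :=
    (WeakBilin.isEmbedding (B := B) Function.injective_id).t2Space
  have hcl : IsClosed (Φ '' K) := (hK.isCompact.image hΦ).isClosed
  have hcv : Convex ℝ (Φ '' K) := by
    rintro _ ⟨m, hm, rfl⟩ _ ⟨n, hn, rfl⟩ a b ha hb hab
    lift a to ℝ≥0 using ha
    lift b to ℝ≥0 using hb
    have hab' : a + b = 1 := by exact_mod_cast hab
    have hb' : 1 - a = b := by rw [← hab']; simp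
    let σ : Measure X := (a : ℝ≥0∞) • (m : Measure X) + (b : ℝ≥0∞) • (n : Measure X)
    have hσ : IsProbabilityMeasure σ := ⟨by
      simp only [σ, Measure.add_apply, Measure.smul_apply, measure_univ, smul_eq_mul, mul_one]
      exact_mod_cast hab'⟩
    refine ⟨⟨σ, hσ⟩, hconv m hm n hn a (by rw [← hab']; simp) _ (by rw [hb']; rfl), ?_⟩
    refine LinearMap.ext (fun f : C(X, ℝ) => ?_)
    change ∫ x, f x ∂σ = (a : ℝ) * ∫ x, f x ∂(m : Measure X) + (b : ℝ) * ∫ x, f x ∂(n : Measure X)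
    rw [integral_add_measure ((hint m f).smul_measure (by simp))
      ((hint n f).smul_measure (by simp)), integral_smul_measure, integral_smul_measure]
    simp
  have hnot : Φ p ∉ Φ '' K := by
    rintro ⟨m, hm, h⟩
    exact hp (hinj h ▸ hm)
  obtain ⟨L, c, h1, h2⟩ := geometric_hahn_banach_closed_point hcv hcl hnot
  obtain ⟨f, rfl⟩ := LinearMap.dualEmbedding_surjective B L
  exact ⟨f, c, fun m hm => h1 _ ⟨m, hm, rfl⟩, h2⟩

lemma separation_lemma' {X : Type*} [MetricSpace X] [CompactSpace X] [MeasurableSpace X]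
    [BorelSpace X] (K : Set (ProbabilityMeasure X)) (hK : IsClosed K)
    (hconv : ∀ μ ∈ K, ∀ ν ∈ K, ∀ a : NNReal, a ≤ 1 → ∀ σ : ProbabilityMeasure X,
      (σ : Measure X) = (a : ℝ≥0∞) • (μ : Measure X)
        + ((1 - a : NNReal) : ℝ≥0∞) • (ν : Measure X) → σ ∈ K)
    (p : ProbabilityMeasure X) (hp : p ∉ K) :
    ∃ (g : C(X, ℝ≥0)) (c : ℝ≥0∞), (∀ m ∈ K, ∫⁻ x, g x ∂(m : Measure X) < c) ∧
      c < ∫⁻ x, g x ∂(p : Measure X) := by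
  obtain ⟨f, c, h1, h2⟩ := separation_lemma K hK hconv p hp
  set k : ℝ := ‖f‖ + |c| + 1 with hk
  have hf : ∀ x, 0 ≤ f x + k := fun x => by
    have := (abs_le.1 (f.norm_coe_le_norm x)).1
    have := abs_nonneg c
    linarith
  have hck : 0 < c + k := by
    have := neg_abs_le c
    have := norm_nonneg f
    linarith
  have key : ∀ m : ProbabilityMeasure X,
      ∫⁻ x, (Real.toNNReal (f x + k) : ℝ≥0∞) ∂(m : Measure X)
        = ENNReal.ofReal ((∫ x, f x ∂(m : Measure X)) + k) := by
    intro m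
    have hi : Integrable f (m : Measure X) :=
      f.continuous.integrable_of_hasCompactSupport (HasCompactSupport.of_compactSpace _)
    have : (∫ x, f x ∂(m : Measure X)) + k = ∫ x, (f x + k) ∂(m : Measure X) := by
      rw [integral_add hi (integrable_const _)]; simp
    rw [this, ofReal_integral_eq_lintegral_ofReal (f := fun x => f x + k)
      (hi.add (integrable_const k))
      (Eventually.of_forall hf)]
    rfl
  refine ⟨⟨fun x => Real.toNNReal (f x + k), by fun_prop⟩, ENNReal.ofReal (c + k), ?_, ?_⟩
  · intro m hm
    refine (key m).trans_lt ?_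
    rw [ENNReal.ofReal_lt_ofReal_iff hck]
    linarith [h1 m hm]
  · refine lt_of_lt_of_eq ?_ (key p).symm
    rw [ENNReal.ofReal_lt_ofReal_iff (by linarith)]
    linarith

lemma measurable_coe_pm {X : Type*} [MetricSpace X] [CompactSpace X] [MeasurableSpace X]
    [BorelSpace X]
    [MeasurableSpace (ProbabilityMeasure X)] [BorelSpace (ProbabilityMeasure X)] :
    Measurable (fun m : ProbabilityMeasure X => (m : Measure X)) := by
  refine Measurable.measure_of_isPiSystem_of_isProbabilityMeasure
    (S := {s | IsClosed s}) ?_ isPiSystem_isClosed ?_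
  · rw [BorelSpace.measurable_eq (α := X), borel_eq_generateFrom_isClosed]
  · intro F hF
    refine measurable_of_tendsto_metrizable
      (f := fun (n : ℕ) (m : ProbabilityMeasure X) => ∫⁻ x, (IsClosed.apprSeq hF n x : ℝ≥0∞) ∂(m : Measure X)) ?_ ?_
    · intro n
      exact (ProbabilityMeasure.continuous_lintegral_boundedContinuousFunction _).measurable
    · rw [tendsto_pi_nhds]
      intro m
      exact HasOuterApproxClosed.tendsto_lintegral_apprSeq hF (m : Measure X)

lemma tendsto_zero_of_limsup (v : ℝ → ℝ≥0∞) (a : ℝ≥0∞) (ha : 0 < a)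
    (h : Filter.limsup (fun t : ℝ => ((1 / t : ℝ) : EReal) * ENNReal.log (v t)) atTop
      ≤ -(a : EReal)) : Tendsto v atTop (𝓝 0) := by
  obtain ⟨r, hr0, hra⟩ := ENNReal.lt_iff_exists_nnreal_btwn.1 ha
  have hr0' : 0 < r := by exact_mod_cast hr0
  have hlt : -(a : EReal) < ((-(r : ℝ) : ℝ) : EReal) := by
    rw [EReal.coe_neg, EReal.neg_lt_neg_iff]
    exact EReal.coe_ennreal_lt_coe_ennreal_iff.2 hra
  have hev := eventually_lt_of_limsup_lt (h.trans_lt hlt)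
  rw [ENNReal.tendsto_nhds_zero]
  intro ε hε
  obtain ⟨e, he0, heε⟩ := ENNReal.lt_iff_exists_nnreal_btwn.1 hε
  have he0' : e ≠ 0 := by
    rintro rfl
    simp at he0
  have hl : Tendsto (fun t : ℝ => (1 / t) * Real.log e) atTop (𝓝 (0 * Real.log e)) := by
    refine Tendsto.mul_const _ ?_
    exact (tendsto_inv_atTop_zero (𝕜 := ℝ)).congr fun t => (one_div t).symm
  rw [zero_mul] at hl
  have hev2 := hl.eventually (lt_mem_nhds (show -(r : ℝ) < 0 by simpa using hr0'))
  filter_upwards [hev, hev2, eventually_gt_atTop 0] with t h1 h2 h3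
  refine le_trans ?_ heε.le
  by_contra hcon
  push Not at hcon
  have h4 : ENNReal.log (e : ℝ≥0∞) ≤ ENNReal.log (v t) := ENNReal.log_le_log hcon.le
  rw [ENNReal.log_of_nnreal he0'] at h4
  have h5 : ((1 / t : ℝ) : EReal) * ((Real.log e : ℝ) : EReal)
      ≤ ((1 / t : ℝ) : EReal) * ENNReal.log (v t) :=
    mul_le_mul_of_nonneg_left h4 (by exact_mod_cast (by positivity : (0 : ℝ) ≤ 1 / t))
  have h6 := h5.trans_lt h1
  rw [← EReal.coe_mul, EReal.coe_lt_coe_iff] at h6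
  linarith

/-- Let `X` be a compact metric space, `β t` Borel probability measures on
`X` and `δ t : X → 𝒫(X)` measurable maps. Suppose `J : 𝒫(X) → [0,∞]` is a lower
semicontinuous convex functional with nonempty zero set such that for every open
neighborhood `U` of `{J = 0}` one has the large deviations upper bound
`limsup (1/t) log (ν t Uᶜ) ≤ - inf {J m : m ∈ Uᶜ}`, where `ν t := β t ∘ (δ t)⁻¹`.
Then every weak limit `μ` of the expectations `μ t := ∫ δ t x dβ t (x)` as `t → ∞`
satisfies `J μ = 0`. -/
theorem weak_limits_vanish_J
    {X : Type*} [MetricSpace X] [CompactSpace X] [MeasurableSpace X] [BorelSpace X]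
    [MeasurableSpace (ProbabilityMeasure X)] [BorelSpace (ProbabilityMeasure X)]
    (β : ℝ → ProbabilityMeasure X)
    (δ : ℝ → X → ProbabilityMeasure X)
    (hδ : ∀ t : ℝ, 0 ≤ t → Measurable (δ t))
    (μ : ℝ → ProbabilityMeasure X)
    (hμ : ∀ t : ℝ, 0 ≤ t →
      (μ t : Measure X) = (β t : Measure X).bind (fun x => (δ t x : Measure X)))
    (J : ProbabilityMeasure X → ℝ≥0∞)
    (hJlsc : LowerSemicontinuous J)
    (hJconv : ConvexPMFunctional J)
    (hJne : {m : ProbabilityMeasure X | J m = 0}.Nonempty)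
    (hub : ∀ U : Set (ProbabilityMeasure X), IsOpen U →
      {m : ProbabilityMeasure X | J m = 0} ⊆ U →
      Filter.limsup (fun t : ℝ =>
          ((1 / t : ℝ) : EReal) * ENNReal.log (((β t : Measure X).map (δ t)) Uᶜ)) atTop
        ≤ -((⨅ m ∈ Uᶜ, J m : ℝ≥0∞) : EReal))
    (tn : ℕ → ℝ) (htn0 : ∀ n, 0 ≤ tn n) (htn : Tendsto tn atTop atTop)
    (μlim : ProbabilityMeasure X)
    (hlim : Tendsto (fun n => μ (tn n)) atTop (𝓝 μlim)) :
    J μlim = 0 := by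
  classical
  by_contra hne
  set K : Set (ProbabilityMeasure X) := {m | J m = 0} with hKdef
  have hK : IsClosed K := by
    have : K = J ⁻¹' Set.Iic 0 := by ext m; simp [hKdef]
    rw [this]
    exact hJlsc.isClosed_preimage 0
  obtain ⟨g, c, hgK, hgp⟩ := separation_lemma' K hK (by
    intro m hm n hn a ha σ hσ
    have h := hJconv m n a ha σ hσ
    have hm' : J m = 0 := hm
    have hn' : J n = 0 := hn
    rw [hm', hn'] at h
    have : J σ = 0 := by simpa using h
    exact this) μlim hne
  have hgc : Continuous fun m : ProbabilityMeasure X => ∫⁻ x, g x ∂(m : Measure X) :=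
    ProbabilityMeasure.continuous_lintegral_continuousMap g
  let U : Set (ProbabilityMeasure X) := {m | ∫⁻ x, g x ∂(m : Measure X) < c}
  have hU : IsOpen U := isOpen_lt hgc continuous_const
  have hinf : 0 < ⨅ m ∈ Uᶜ, J m := by
    rcases (Uᶜ).eq_empty_or_nonempty with he | hne'
    · simp [he]
    · obtain ⟨m, hm, hmin⟩ := LowerSemicontinuousOn.exists_isMinOn hne'
        hU.isClosed_compl.isCompact (hJlsc.lowerSemicontinuousOn _)
      refine lt_of_lt_of_le (pos_iff_ne_zero.2 fun h0 => hm (hgK m h0)) ?_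
      exact le_iInf₂ fun n hn => hmin hn
  have hv := (tendsto_zero_of_limsup _ _ hinf (hub U hU hgK)).comp htn
  obtain ⟨M, hM⟩ : ∃ M : ℝ≥0, ∀ x, g x ≤ M := by
    obtain ⟨M, hM⟩ := (isCompact_range g.continuous).bddAbove
    exact ⟨M, fun x => hM ⟨x, rfl⟩⟩
  have hbound : ∀ n, ∫⁻ x, g x ∂(μ (tn n) : Measure X)
      ≤ c + M * ((β (tn n) : Measure X).map (δ (tn n))) Uᶜ := by
    intro n
    have hd := hδ _ (htn0 n)
    have hUm : MeasurableSet (δ (tn n) ⁻¹' Uᶜ) := hd hU.isClosed_compl.measurableSet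
    rw [hμ _ (htn0 n), Measure.lintegral_bind (μ := fun x => (δ (tn n) x : Measure X))
      (measurable_coe_pm.comp hd).aemeasurable
      (by exact (ENNReal.continuous_coe.comp g.continuous).measurable.aemeasurable), Measure.map_apply hd hU.isClosed_compl.measurableSet]
    calc ∫⁻ x, ∫⁻ y, g y ∂(δ (tn n) x : Measure X) ∂(β (tn n) : Measure X)
        ≤ ∫⁻ x, (c + (δ (tn n) ⁻¹' Uᶜ).indicator (fun _ => (M : ℝ≥0∞)) x)
            ∂(β (tn n) : Measure X) := by
          refine lintegral_mono fun x => ?_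
          by_cases hx : δ (tn n) x ∈ U
          · exact le_add_right (le_of_lt hx)
          · rw [Set.indicator_of_mem (show x ∈ δ (tn n) ⁻¹' Uᶜ from hx)]
            refine le_add_left ?_
            calc ∫⁻ y, g y ∂(δ (tn n) x : Measure X)
                ≤ ∫⁻ y, (M : ℝ≥0∞) ∂(δ (tn n) x : Measure X) :=
                  lintegral_mono fun y => ENNReal.coe_le_coe.2 (hM y)
              _ = M := by simp
      _ = _ := by
          rw [lintegral_add_left measurable_const, lintegral_indicator_const hUm]
          simp
  have hl1 := (hgc.tendsto μlim).comp hlim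
  have hl2 : Tendsto (fun n => c + M * ((β (tn n) : Measure X).map (δ (tn n))) Uᶜ) atTop
      (𝓝 (c + M * 0)) :=
    tendsto_const_nhds.add (ENNReal.Tendsto.const_mul hv (Or.inr ENNReal.coe_ne_top))
  rw [mul_zero, add_zero] at hl2
  exact absurd hgp (not_lt.2 (le_of_tendsto_of_tendsto' hl1 hl2 hbound))
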